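/- Let q, a be nonzero complex numbers such that q^m ≠ 1, a q^m ≠ 1, and a^3 q^{3m} ≠ 1 for all m ≥ 1 (so that all denominators below are nonzero). Suppose (α_n, β_n) is a Bailey pair with parameters (a^3, q^3). Define α'_r = a^{-r} q^{-r^2} α_r and β'_n = (1/(aq;q)_{2n}) · ∑_{k=0}^{n} [(a q^{2n+1}; q^{-1})_{3k} (a^3 q^3;q^3)_{2(n-k)} / (q^3;q^3)_k] · (-1)^k q^{3k(k-1)/2 - n^2} a^{-n} β_{n-k}, where (a q^{2n+1}; q^{-1})_{3k} = ∏_{j=0}^{3k-1}(1 - a q^{2n+1-j}). Then (α'_n, β'_n) is a Bailey pair with parameters (a, q). -/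

import Mathlib

/-- The finite q-Pochhammer symbol `(x;q)_n = ∏_{j=0}^{n-1} (1 - x q^j)`. -/
noncomputable def qPoch (x q : ℂ) (n : ℕ) : ℂ := ∏ j ∈ Finset.range n, (1 - x * q ^ j)

/-- `(α, β)` is a Bailey pair with parameters `(a, q)`. -/
def IsBaileyPair (a q : ℂ) (α β : ℕ → ℂ) : Prop :=
  ∀ n : ℕ, β n = ∑ r ∈ Finset.range (n + 1), α r / (qPoch q q (n - r) * qPoch (a * q) q (n + r))

lemma qP_succ (x q : ℂ) (n : ℕ) : qPoch x q (n+1) = qPoch x q n * (1 - x * q^n) := by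
  simp [qPoch, Finset.prod_range_succ]

lemma qP_zero (x q : ℂ) : qPoch x q 0 = 1 := by simp [qPoch]

lemma qP_add (x q : ℂ) (m n : ℕ) :
    qPoch x q (m+n) = qPoch x q m * qPoch (x * q^m) q n := by
  simp only [qPoch, Finset.prod_range_add]
  congr 1
  exact Finset.prod_congr rfl fun i _ => by ring

lemma qP_succ' (x q : ℂ) (n : ℕ) : qPoch x q (n+1) = (1 - x) * qPoch (x * q) q n := by
  rw [add_comm, qP_add]; simp [qPoch]

lemma qP_ne (x q : ℂ) (h : ∀ m : ℕ, x * q^m ≠ 1) (n : ℕ) : qPoch x q n ≠ 0 := by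
  rw [qPoch, Finset.prod_ne_zero_iff]
  intro i _ h0
  exact h i (sub_eq_zero.mp h0).symm

lemma qP_qq_ne (q : ℂ) (h : ∀ m : ℕ, 1 ≤ m → q^m ≠ 1) (n : ℕ) : qPoch q q n ≠ 0 :=
  qP_ne q q (fun m => by simpa [pow_succ'] using h (m+1) (by omega)) n

/-- polynomial q-Saalschütz summation with symmetric functions `e = A+B`, `f = AB`. -/
lemma saal (q e f D : ℂ) (hq1 : ∀ m : ℕ, 1 ≤ m → q ^ m ≠ 1) (n : ℕ) :
    ∑ k ∈ Finset.range (n+1), (∏ j ∈ Finset.range k, (1 - e * q^j + f * q^(2*j))) *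
      qPoch D q (n-k) * qPoch (f * D * q^k) q (n-k) * D^k / (qPoch q q k * qPoch q q (n-k))
    = (∏ j ∈ Finset.range n, (1 - e * D * q^j + f * D^2 * q^(2*j))) / qPoch q q n := by
  induction n with
  | zero => simp [qPoch]
  | succ n ih =>
    set W : ℕ → ℂ := fun k => ∏ j ∈ Finset.range k, (1 - e * q^j + f * q^(2*j)) with hW
    have hWs : ∀ k, W (k+1) = W k * (1 - e * q^k + f * q^(2*k)) := fun k => by
      simp [hW, Finset.prod_range_succ]
    have hW0 : W 0 = 1 := by simp [hW]
    set t : ℕ → ℕ → ℂ := fun n k => W k *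
      qPoch D q (n-k) * qPoch (f * D * q^k) q (n-k) * D^k / (qPoch q q k * qPoch q q (n-k)) with ht
    have hP := qP_qq_ne q hq1
    set v : ℂ := 1 - e * D * q^n + f * D^2 * q^(2*n) with hv
    have key : ∀ m, m ≤ n → ∑ k ∈ Finset.range (m+1), ((1 - q^(n+1)) * t (n+1) k - v * t n k)
        = - (q^(n-m) * D * (1 - e * q^m + f * q^(2*m)) * t n m) := by
      intro m
      induction m with
      | zero =>
        intro _
        have h1 : (1 - q^(n+1)) ≠ 0 := sub_ne_zero.mpr (hq1 (n+1) (by omega)).symm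
        have h1' : (1 - q * q^n) ≠ 0 := by rwa [← pow_succ']
        have h2 := hP n
        simp only [ht, zero_add, Finset.sum_range_one, Nat.sub_zero, hW0, qP_zero, qP_succ, pow_zero, mul_one]
        rw [hv]
        simp only [pow_add, pow_mul', pow_one, pow_zero] at h1' ⊢
        generalize q^n = x at *
        have h1c : 1 - x * q ≠ 0 := by rwa [mul_comm]
        field_simp
        ring
      | succ m ihm =>
        intro hm
        rw [Finset.sum_range_succ, ihm (by omega)]
        obtain ⟨d, rfl⟩ := Nat.exists_eq_add_of_le hm
        have e1 : m + 1 + d - m = d + 1 := by omega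
        have e2 : m + 1 + d - (m+1) = d := by omega
        have e3 : m + 1 + d + 1 - (m+1) = d + 1 := by omega
        simp only [ht, e1, e2, e3, hWs]
        rw [qP_succ' (f * D * q^m), qP_succ (f * D * q^(m+1)), qP_succ D, qP_succ q q m, qP_succ q q d]
        have e4 : f * D * q^m * q = f * D * q^(m+1) := by ring
        rw [e4]
        have h1 : (1 - q * q^d) ≠ 0 := by
          rw [← pow_succ']; exact sub_ne_zero.mpr (hq1 (d+1) (by omega)).symm
        have h1' : (1 - q * q^m) ≠ 0 := by
          rw [← pow_succ']; exact sub_ne_zero.mpr (hq1 (m+1) (by omega)).symm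
        have h2 := hP m
        have h3 := hP d
        rw [hv]
        generalize qPoch (f * D * q^(m+1)) q d = X
        simp only [pow_add, pow_mul', pow_one] at h1 h1' ⊢
        generalize q^m = x at *
        generalize q^d = x' at *
        have h1c : 1 - x * q ≠ 0 := by rwa [mul_comm]
        have h1d : 1 - x' * q ≠ 0 := by rwa [mul_comm]
        field_simp
        ring
    have hk := key n le_rfl
    rw [Finset.sum_sub_distrib, ← Finset.mul_sum, ← Finset.mul_sum] at hk
    change ∑ k ∈ Finset.range (n+1), t n k = _ at ih
    change ∑ k ∈ Finset.range (n+1+1), t (n+1) k = _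
    rw [ih] at hk
    rw [Finset.sum_range_succ, Finset.prod_range_succ, ← hv]
    have h1 : (1 - q^(n+1)) ≠ 0 := sub_ne_zero.mpr (hq1 (n+1) (by omega)).symm
    have h1' : (1 - q * q^n) ≠ 0 := by rwa [← pow_succ']
    have h2 := hP n
    have h3 : (1 - q^(n+1)) * t (n+1) (n+1) = q^(n-n) * D * (1 - e * q^n + f * q^(2*n)) * t n n := by
      simp only [ht, Nat.sub_self, qP_zero, hWs, qP_succ]
      simp only [pow_add, pow_mul', pow_one]
      generalize q^n = x at *
      have h1c : 1 - x * q ≠ 0 := by rwa [mul_comm]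
      field_simp
    apply mul_left_cancel₀ h1
    rw [mul_add, h3, qP_succ]
    have h4 : (1 - q^(n+1)) * ((∏ j ∈ Finset.range n, (1 - e * D * q^j + f * D^2 * q^(2*j))) * v / (qPoch q q n * (1 - q * q^n)))
       = v * ((∏ j ∈ Finset.range n, (1 - e * D * q^j + f * D^2 * q^(2*j))) / qPoch q q n) := by
      rw [pow_succ']
      generalize 1 - q * q^n = x at *
      field_simp
    rw [h4]
    linear_combination hk

lemma cubeW (q : ℂ) (hq : q ≠ 0) (N : ℕ) : ∀ k, k ≤ N →
    (∏ j ∈ Finset.range k, (1 - (-(1/q^N)) * q^j + (1/q^(2*N)) * q^(2*j))) * q^((2*N+1)*k)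
      * qPoch (q^3) (q^3) (N-k) * qPoch q q N
    = qPoch (q^3) (q^3) N * qPoch q q (N-k) * q^(k^2) := by
  intro k
  induction k with
  | zero => intro _; simp
  | succ k ih =>
    intro hk
    have ih := ih (by omega)
    obtain ⟨d, rfl⟩ := Nat.exists_eq_add_of_le hk
    have e1 : k + 1 + d - k = d + 1 := by omega
    have e2 : k + 1 + d - (k+1) = d := by omega
    rw [e1, qP_succ (q^3) (q^3) d, qP_succ q q d] at ih
    rw [e2, Finset.prod_range_succ]
    by_cases h0 : (1 - q * q^d) = 0
    · have : qPoch q q (k+1+d) = 0 := by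
        rw [show k+1+d = (d+1)+k by ring, qP_add, qP_succ, h0]; ring
      have h3 : qPoch (q^3) (q^3) (k+1+d) = 0 := by
        have : 1 - q^3 * (q^3)^d = 0 := by
          have : q * q^d = 1 := (sub_eq_zero.mp h0).symm
          have : (q * q^d)^3 = 1 := by rw [this]; ring
          linear_combination -this
        rw [show k+1+d = (d+1)+k by ring, qP_add, qP_succ, this]; ring
      rw [this, h3]; ring
    apply mul_left_cancel₀ h0
    have hx : (1 - (-(1/q^(k+1+d))) * q^k + (1/q^(2*(k+1+d))) * q^(2*k)) * q^(2*(k+1+d)+1) * (1 - q * q^d)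
       = q^(2*k+1) * (1 - q^3 * (q^3)^d) := by
      have : q^(2*(k+1+d)+1) ≠ 0 := pow_ne_zero _ hq
      field_simp
      ring
    rw [show (2*(k+1+d)+1)*(k+1) = (2*(k+1+d)+1)*k + (2*(k+1+d)+1) by ring,
      show (k+1)^2 = k^2 + (2*k+1) by ring, pow_add q ((2*(k+1+d)+1)*k), pow_add q (k^2)]
    generalize (∏ j ∈ Finset.range k, (1 - (-(1/q^(k+1+d))) * q^j + (1/q^(2*(k+1+d))) * q^(2*j))) = W at *
    generalize (1 - (-(1/q^(k+1+d))) * q^k + (1/q^(2*(k+1+d))) * q^(2*k)) = w at *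
    generalize q^((2*(k+1+d)+1)*k) = u1 at *
    generalize q^(2*(k+1+d)+1) = u2 at *
    generalize q^(2*k+1) = u3 at *
    linear_combination u3 * ih + W * u1 * qPoch (q^3) (q^3) d * qPoch q q (k+1+d) * hx

lemma cubic (q b : ℂ) (hq : q ≠ 0) (hq1 : ∀ m : ℕ, 1 ≤ m → q ^ m ≠ 1)
    (hb1 : ∀ m : ℕ, 1 ≤ m → b * q ^ m ≠ 1) (hb3 : ∀ m : ℕ, 1 ≤ m → b^3 * q ^ (3*m) ≠ 1) (N : ℕ) :
    ∑ k ∈ Finset.range (N+1), qPoch (b*q) q (3*N-k) * b^k * q^(k^2) /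
      (qPoch (q^3) (q^3) (N-k) * qPoch q q k * qPoch (b*q) q k)
    = qPoch (b^3*q^3) (q^3) (2*N) / (qPoch (q^3) (q^3) N * qPoch (b^3*q^3) (q^3) N) := by
  have hP := qP_qq_ne q hq1
  have hP3 : ∀ n, qPoch (q^3) (q^3) n ≠ 0 := qP_qq_ne (q^3) (fun m hm => by
    rw [← pow_mul]; exact hq1 _ (by omega))
  have hB : ∀ n, qPoch (b*q) q n ≠ 0 := qP_ne _ _ (fun m => by
    rw [mul_assoc, ← pow_succ']; exact hb1 _ (by omega))
  have hB3 : ∀ n, qPoch (b^3*q^3) (q^3) n ≠ 0 := qP_ne _ _ (fun m => by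
    rw [mul_assoc, ← pow_succ', ← pow_mul]; exact hb3 _ (by omega))
  have hs := saal q (-(1/q^N)) (1/q^(2*N)) (b * q^(2*N+1)) hq1 N
  have hterm : ∀ k ∈ Finset.range (N+1), qPoch (b*q) q (3*N-k) * b^k * q^(k^2) /
      (qPoch (q^3) (q^3) (N-k) * qPoch q q k * qPoch (b*q) q k)
      = (qPoch (b*q) q (2*N) * qPoch q q N / (qPoch (q^3) (q^3) N * qPoch (b*q) q N)) *
       ((∏ j ∈ Finset.range k, (1 - (-(1/q^N)) * q^j + (1/q^(2*N)) * q^(2*j))) *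
      qPoch (b * q^(2*N+1)) q (N-k) * qPoch (1/q^(2*N) * (b * q^(2*N+1)) * q^k) q (N-k) * (b * q^(2*N+1))^k / (qPoch q q k * qPoch q q (N-k))) := by
    intro k hk
    have hk : k ≤ N := by simpa [Nat.lt_succ_iff] using hk
    have hc := cubeW q hq N k hk
    have e1 : 1/q^(2*N) * (b * q^(2*N+1)) * q^k = b * q * q^k := by
      field_simp
      ring
    have e2 : qPoch (b*q) q (3*N-k) = qPoch (b*q) q (2*N) * qPoch (b * q^(2*N+1)) q (N-k) := by
      rw [show 3*N-k = 2*N + (N-k) by omega, qP_add]; congr 2; ring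
    have e3 : qPoch (b*q) q N = qPoch (b*q) q k * qPoch (b*q*q^k) q (N-k) := by
      rw [← qP_add]; congr 1; omega
    rw [e1, e2]
    have h1 := hP N
    have h2 := hP k
    have h3 := hP (N-k)
    have h4 := hP3 N
    have h5 := hP3 (N-k)
    have h6 := hB N
    have h7 := hB k
    rw [mul_pow, ← pow_mul]
    generalize (∏ j ∈ Finset.range k, (1 - (-(1/q^N)) * q^j + (1/q^(2*N)) * q^(2*j))) = W at *
    rw [div_mul_div_comm, div_eq_div_iff (by positivity) (by positivity), e3]
    generalize qPoch (b*q*q^k) q (N-k) = X at *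
    generalize qPoch (b * q^(2*N+1)) q (N-k) = Y at *
    linear_combination (- qPoch (b*q) q (2*N) * Y * X * b^k * qPoch q q k * qPoch (b*q) q k) * hc
  rw [Finset.sum_congr rfl hterm, ← Finset.mul_sum, hs]
  have hV : (∏ j ∈ Finset.range N, (1 - (-(1/q^N)) * (b * q^(2*N+1)) * q^j + 1/q^(2*N) * (b * q^(2*N+1))^2 * q^(2*j))) * qPoch (b*q*q^N) q N = qPoch (b^3*q^3*(q^3)^N) (q^3) N := by
    rw [qPoch, qPoch, ← Finset.prod_mul_distrib]
    refine Finset.prod_congr rfl fun j _ => ?_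
    field_simp
    ring
  have h1 := hP N
  have h4 := hP3 N
  have h6 := hB N
  have h7 := hB3 N
  generalize (∏ j ∈ Finset.range N, (1 - (-(1/q^N)) * (b * q^(2*N+1)) * q^j + 1/q^(2*N) * (b * q^(2*N+1))^2 * q^(2*j))) = V at hV ⊢
  rw [two_mul N, qP_add, qP_add (b^3*q^3), ← hV]
  field_simp

lemma qdiff (p : ℂ) (hp : p ≠ 0) (hp1 : ∀ m : ℕ, 1 ≤ m → p ^ m ≠ 1) (y : ℕ → ℂ) (m : ℕ) :
    ∀ M, m < M → ∑ k ∈ Finset.range (M+1), (-1)^k * p^(k*(k-1)/2) *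
      (∏ i ∈ Finset.range m, (1 - y i * (p^k)⁻¹)) / (qPoch p p k * qPoch p p (M-k)) = 0 := by
  have hP := qP_qq_ne p hp1
  have hn : ∀ d : ℕ, 1 - p * p^d ≠ 0 := fun d => by
    rw [← pow_succ']; exact sub_ne_zero.mpr (hp1 (d+1) (by omega)).symm
  induction m with
  | zero =>
    intro M hM
    obtain ⟨M, rfl⟩ : ∃ M', M = M' + 1 := ⟨M-1, by omega⟩
    have key : ∀ m, m ≤ M → ∑ k ∈ Finset.range (m+1), (-1)^k * p^(k*(k-1)/2) *
      (∏ i ∈ Finset.range 0, (1 - y i * (p^k)⁻¹)) / (qPoch p p k * qPoch p p (M+1-k))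
      = (-1)^m * p^((m+1)*(m+1-1)/2) / (qPoch p p m * qPoch p p (M-m) * (1 - p * p^M)) := by
      intro m
      induction m with
      | zero => intro _; simp [qP_zero, qP_succ]
      | succ m ih =>
        intro hm
        rw [Finset.sum_range_succ, ih (by omega)]
        obtain ⟨d, rfl⟩ := Nat.exists_eq_add_of_le hm
        have e1 : m + 1 + d - m = d + 1 := by omega
        have e2 : m + 1 + d - (m+1) = d := by omega
        have e3 : m + 1 + d + 1 - (m+1) = d + 1 := by omega
        rw [e1, e2, e3, Nat.triangle_succ (m+1), qP_succ, qP_succ]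
        have h1 := hn m
        have h2 := hn d
        have h3 := hP m
        have h4 := hP d
        have h5 := hn (m+1+d)
        simp only [Finset.prod_range_zero]
        field_simp
        ring
    rw [Finset.sum_range_succ, key M le_rfl]
    have h3 := hP M
    have h2 := hn M
    simp only [Finset.prod_range_zero, Nat.sub_self, qP_zero, qP_succ]
    field_simp
    ring
  | succ m ih =>
    intro M hM
    obtain ⟨M, rfl⟩ : ∃ M', M = M' + 1 := ⟨M-1, by omega⟩
    have i1 := ih (M+1) (by omega)
    have i2 := ih M (by omega)
    have hsplit : ∀ k ∈ Finset.range (M+1), (-1)^k * p^(k*(k-1)/2) *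
      (∏ i ∈ Finset.range (m+1), (1 - y i * (p^k)⁻¹)) / (qPoch p p k * qPoch p p (M+1-k))
      = (1 - y m * (p^(M+1))⁻¹) * ((-1)^k * p^(k*(k-1)/2) *
      (∏ i ∈ Finset.range m, (1 - y i * (p^k)⁻¹)) / (qPoch p p k * qPoch p p (M+1-k)))
      + y m * (p^(M+1))⁻¹ * ((-1)^k * p^(k*(k-1)/2) *
      (∏ i ∈ Finset.range m, (1 - y i * (p^k)⁻¹)) / (qPoch p p k * qPoch p p (M-k))) := by
      intro k hk
      have hk : k ≤ M := by simpa [Nat.lt_succ_iff] using hk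
      obtain ⟨d, rfl⟩ := Nat.exists_eq_add_of_le hk
      have e1 : k + d + 1 - k = d + 1 := by omega
      have e2 : k + d - k = d := by omega
      rw [e1, e2, Finset.prod_range_succ, qP_succ p p d]
      generalize (∏ i ∈ Finset.range m, (1 - y i * (p^k)⁻¹)) = Z
      have h2 := hn d
      have h3 := hP k
      have h4 := hP d
      field_simp
      ring
    rw [Finset.sum_range_succ, Finset.sum_congr rfl hsplit, Finset.sum_add_distrib,
      ← Finset.mul_sum, ← Finset.mul_sum, i2, Finset.prod_range_succ]
    rw [Finset.sum_range_succ] at i1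
    linear_combination (1 - y m * (p^(M+1))⁻¹) * i1

/-- product over an integer interval -/
noncomputable def Zp (a q : ℂ) (s : ℤ) (l : ℕ) : ℂ := ∏ i ∈ Finset.range l, (1 - a * q^(s + (i:ℤ)))

lemma Zp_add (a q : ℂ) (s : ℤ) (l m : ℕ) : Zp a q s (l+m) = Zp a q s l * Zp a q (s+l) m := by
  simp only [Zp, Finset.prod_range_add]
  congr 1
  refine Finset.prod_congr rfl fun i _ => ?_
  push_cast; rw [add_assoc]

lemma qP_Zp (a q : ℂ) (hq : q ≠ 0) (l : ℕ) : qPoch (a*q) q l = Zp a q 1 l := by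
  refine Finset.prod_congr rfl fun i _ => ?_
  rw [zpow_add₀ hq, zpow_one, zpow_natCast]; ring

lemma Q_Zp (a q : ℂ) (s : ℤ) (l : ℕ) :
    ∏ j ∈ Finset.range l, (1 - a * q ^ (s + l - 1 - (j : ℤ))) = Zp a q s l := by
  rw [Zp, ← Finset.prod_range_reflect]
  refine Finset.prod_congr rfl fun i hi => ?_
  have : i < l := by simpa using hi
  congr 3
  rw [Nat.cast_sub (by omega), Nat.cast_sub (by omega)]; push_cast; ring

lemma Zsplit (a q : ℂ) (n m j k : ℕ) (hn : n = j + m + 1) (hk : k ≤ m + 1) :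
    Zp a q (2*n+2-3*k) (3*k) * Zp a q 1 (3*(n-k)-j)
     = Zp a q 1 (2*n+1) * Zp a q (2*n+2-3*k) m := by
  by_cases h : 3*k ≤ 2*n+1
  · obtain ⟨u, hu⟩ := Nat.exists_eq_add_of_le h
    have hs : (2*n+2-3*k : ℤ) = 1 + (u:ℤ) := by omega
    rw [hs, show 2*n+1 = u + 3*k by omega, show 3*(n-k)-j = u + m by omega, Zp_add, Zp_add]; ring
  · obtain ⟨u, hu⟩ := Nat.exists_eq_add_of_le (show 2*n+1 ≤ 3*k by omega)
    obtain ⟨w, hw⟩ := Nat.exists_eq_add_of_le (show u ≤ m by omega)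
    have hs : (2*n+2-3*k : ℤ) + (u:ℤ) = 1 := by omega
    rw [show 3*k = u + (2*n+1) by omega, hw, Zp_add, Zp_add _ _ _ u w]
    rw [show 3*(n-k)-j = w by omega]
    have hs2 : (2*n+2-((u + (2*n+1) : ℕ):ℤ) : ℤ) + (u:ℤ) = 1 := by push_cast; ring
    rw [hs]; ring

lemma orth (q a : ℂ) (hq : q ≠ 0) (hq1 : ∀ m : ℕ, 1 ≤ m → q ^ m ≠ 1) (n j : ℕ) (hj : j ≤ n) :
    ∑ k ∈ Finset.range (n-j+1), Zp a q (2*n+2-3*k) (3*k) * (-1)^k * (q^3)^(k*(k-1)/2) *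
      qPoch (a*q) q (3*(n-k)-j) / (qPoch (q^3) (q^3) k * qPoch (q^3) (q^3) (n-j-k))
     = if j = n then qPoch (a*q) q (2*n) else 0 := by
  split_ifs with h
  · subst h
    simp [Zp, qP_zero]
    congr 1; omega
  · obtain ⟨m, hm⟩ := Nat.exists_eq_add_of_le (show j + 1 ≤ n by omega)
    have hm : n = j + m + 1 := by omega
    have := qdiff (q^3) (pow_ne_zero _ hq) (fun m hm => by
      rw [← pow_mul]; exact hq1 _ (by omega)) (fun i => a * q^(2*n+2+i)) m (m+1) (by omega)
    rw [show n - j = m + 1 by omega]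
    have h0 : Zp a q 1 (2*n+1) * 0 = 0 := mul_zero _
    rw [← this, Finset.mul_sum] at h0
    rw [this] at h0
    rw [← h0]
    refine Finset.sum_congr rfl fun k hk => ?_
    have hk : k ≤ m + 1 := by simpa [Nat.lt_succ_iff] using hk
    have hz := Zsplit a q n m j k hm hk
    have hz2 : Zp a q (2*n+2-3*k) m
        = ∏ i ∈ Finset.range m, (1 - a * q^(2*n+2+i) * ((q^3)^k)⁻¹) := by
      refine Finset.prod_congr rfl fun i _ => ?_
      rw [show (2*n+2-3*k + i : ℤ) = ((2*n+2+i : ℕ) : ℤ) - ((3*k : ℕ) : ℤ) by push_cast; ring,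
        zpow_sub₀ hq, zpow_natCast, zpow_natCast, pow_mul, mul_assoc, div_eq_mul_inv]
    rw [qP_Zp a q hq, ← hz2, ← mul_div_assoc]
    congr 1
    linear_combination (-1)^k * (q^3)^(k*(k-1)/2) * hz

lemma forward (q a : ℂ) (hq : q ≠ 0) (hq1 : ∀ m : ℕ, 1 ≤ m → q ^ m ≠ 1)
    (ha1 : ∀ m : ℕ, 1 ≤ m → a * q ^ m ≠ 1) (ha3 : ∀ m : ℕ, 1 ≤ m → a^3 * q ^ (3*m) ≠ 1)
    (n r : ℕ) (hr : r ≤ n) :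
    ∑ k ∈ Finset.range (n-r+1), qPoch (a*q) q (3*n-(k+r)) * a^(k+r) * q^((k+r)^2) /
      (qPoch (q^3) (q^3) (n-(k+r)) * (qPoch q q k * qPoch (a*q) q (k+r+r)))
    = a^r * q^(r^2) * qPoch (a^3*q^3) (q^3) (2*n) /
      (qPoch (q^3) (q^3) (n-r) * qPoch (a^3*q^3) (q^3) (n+r)) := by
  obtain ⟨N, rfl⟩ := Nat.exists_eq_add_of_le hr
  have hA : ∀ n, qPoch (a*q) q n ≠ 0 := qP_ne _ _ (fun m => by
    rw [mul_assoc, ← pow_succ']; exact ha1 _ (by omega))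
  have hA3 : ∀ n, qPoch (a^3*q^3) (q^3) n ≠ 0 := qP_ne _ _ (fun m => by
    rw [mul_assoc, ← pow_succ', ← pow_mul]; exact ha3 _ (by omega))
  have hc := cubic q (a * q^(2*r)) hq hq1
    (fun m hm => by rw [mul_assoc, ← pow_add]; exact ha1 _ (by omega))
    (fun m hm => by
      rw [mul_pow, mul_assoc, ← pow_mul, ← pow_add, show 2*r*3+3*m = 3*(2*r+m) by ring]
      exact ha3 _ (by omega)) N
  have s1 : ∀ L, qPoch (a*q) q (2*r+L) = qPoch (a*q) q (2*r) * qPoch (a*q^(2*r)*q) q L := by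
    intro L; rw [qP_add]; congr 2; ring
  have s3 : ∀ L, qPoch (a^3*q^3) (q^3) (2*r+L)
      = qPoch (a^3*q^3) (q^3) (2*r) * qPoch ((a*q^(2*r))^3*q^3) (q^3) L := by
    intro L; rw [qP_add]; congr 2; ring
  have h1 := hA (2*r)
  have h3 := hA3 (2*r)
  rw [show r + N - r = N by omega, show 2*(r+N) = 2*r+2*N by ring, show r+N+r = 2*r+N by ring, s3, s3]
  have hR : a^r * q^(r^2) * (qPoch (a^3*q^3) (q^3) (2*r) * qPoch ((a*q^(2*r))^3*q^3) (q^3) (2*N)) /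
      (qPoch (q^3) (q^3) N * (qPoch (a^3*q^3) (q^3) (2*r) * qPoch ((a*q^(2*r))^3*q^3) (q^3) N))
      = a^r * q^(r^2) * (qPoch ((a*q^(2*r))^3*q^3) (q^3) (2*N) /
      (qPoch (q^3) (q^3) N * qPoch ((a*q^(2*r))^3*q^3) (q^3) N)) := by
    generalize qPoch (a^3*q^3) (q^3) (2*r) = c at *
    generalize qPoch ((a*q^(2*r))^3*q^3) (q^3) (2*N) = c1
    generalize qPoch ((a*q^(2*r))^3*q^3) (q^3) N = c2
    rw [mul_left_comm _ c c2, mul_left_comm _ c c1, mul_div_mul_left _ _ h3, mul_div_assoc]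
  rw [hR, ← hc, Finset.mul_sum]
  refine Finset.sum_congr rfl fun k hk => ?_
  have hk : k ≤ N := by simpa [Nat.lt_succ_iff] using hk
  rw [show 3*(r+N)-(k+r) = 2*r+(3*N-k) by omega, show r+N-(k+r) = N-k by omega,
    show k+r+r = 2*r+k by ring, s1, s1, mul_left_comm _ (qPoch (a*q) q (2*r)), mul_left_comm _ (qPoch (a*q) q (2*r)),
    mul_assoc (qPoch (a*q) q (2*r)), mul_assoc (qPoch (a*q) q (2*r)), mul_div_mul_left _ _ h1,
    ← mul_div_assoc, mul_assoc (qPoch (q^3) (q^3) (N-k))]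
  congr 1
  rw [mul_pow, ← pow_mul, show (k+r)^2 = r^2 + 2*r*k + k^2 by ring, pow_add, pow_add, pow_add]
  ring

lemma tri (F : ℕ → ℕ → ℂ) (n : ℕ) :
    ∑ k ∈ Finset.range (n+1), ∑ r ∈ Finset.range (k+1), F k r
     = ∑ r ∈ Finset.range (n+1), ∑ k ∈ Finset.range (n-r+1), F (k+r) r := by
  induction n with
  | zero => simp
  | succ n ih =>
    rw [Finset.sum_range_succ, ih, Finset.sum_range_succ _ (n+1), Finset.sum_range_succ _ (n+1), ← add_assoc,
      ← Finset.sum_add_distrib]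
    congr 1
    · refine Finset.sum_congr rfl fun r hr => ?_
      have hr : r ≤ n := by simpa [Nat.lt_succ_iff] using hr
      rw [show n+1-r+1 = (n-r+1)+1 by omega, Finset.sum_range_succ _ (n-r+1), show n-r+1+r = n+1 by omega]
    · simp

lemma tri2 (G : ℕ → ℕ → ℂ) (n : ℕ) :
    ∑ k ∈ Finset.range (n+1), ∑ j ∈ Finset.range (n-k+1), G k j
     = ∑ j ∈ Finset.range (n+1), ∑ k ∈ Finset.range (n-j+1), G k j := by
  apply Finset.sum_comm'
  intro x y
  simp only [Finset.mem_range]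
  omega

/-- Theorem 2.4: base change from `(a³, q³)` to `(a, q)`.
Here `(a q^{2n+1}; q^{-1})_{3k} = ∏_{j=0}^{3k-1} (1 - a q^{2n+1-j})` is written with
integer powers of `q`. -/
theorem bailey_base_change_thm24 (q a : ℂ)
    (hq : q ≠ 0) (ha : a ≠ 0)
    (hq1 : ∀ m : ℕ, 1 ≤ m → q ^ m ≠ 1)
    (ha1 : ∀ m : ℕ, 1 ≤ m → a * q ^ m ≠ 1)
    (ha3 : ∀ m : ℕ, 1 ≤ m → a ^ 3 * q ^ (3 * m) ≠ 1)
    (α β : ℕ → ℂ)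
    (hpair : IsBaileyPair (a ^ 3) (q ^ 3) α β) :
    IsBaileyPair a q
      (fun r => a ^ (-(r : ℤ)) * q ^ (-((r : ℤ) ^ 2)) * α r)
      (fun n => (1 / qPoch (a * q) q (2 * n)) *
        ∑ k ∈ Finset.range (n + 1),
          (∏ j ∈ Finset.range (3 * k), (1 - a * q ^ (2 * (n : ℤ) + 1 - (j : ℤ)))) *
              qPoch (a ^ 3 * q ^ 3) (q ^ 3) (2 * (n - k)) / qPoch (q ^ 3) (q ^ 3) k *
            (-1) ^ k * q ^ ((3 * (k * (k - 1) / 2 : ℕ) : ℤ) - (n : ℤ) ^ 2) *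
            a ^ (-(n : ℤ)) * β (n - k)) := by
  have hP3 : ∀ n, qPoch (q^3) (q^3) n ≠ 0 := qP_qq_ne (q^3) (fun m hm => by
    rw [← pow_mul]; exact hq1 _ (by omega))
  have hA : ∀ n, qPoch (a*q) q n ≠ 0 := qP_ne _ _ (fun m => by
    rw [mul_assoc, ← pow_succ']; exact ha1 _ (by omega))
  set α' : ℕ → ℂ := fun r => a ^ (-(r : ℤ)) * q ^ (-((r : ℤ) ^ 2)) * α r with hα'
  have hαα : ∀ r, α' r * (a^r * q^(r^2)) = α r := by
    intro r
    have e1 : a ^ (-(r : ℤ)) * a^r = 1 := by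
      rw [zpow_neg, zpow_natCast]; exact inv_mul_cancel₀ (pow_ne_zero _ ha)
    have e2 : q ^ (-((r : ℤ)^2)) * q^(r^2) = 1 := by
      rw [zpow_neg, ← Nat.cast_pow, zpow_natCast]; exact inv_mul_cancel₀ (pow_ne_zero _ hq)
    simp only [hα']
    linear_combination α r * (q ^ (-((r : ℤ)^2)) * q^(r^2)) * e1 + α r * e2
  set γ : ℕ → ℂ := fun n => ∑ r ∈ Finset.range (n+1), α' r / (qPoch q q (n - r) * qPoch (a * q) q (n + r)) with hγ
  have hβ : ∀ n, qPoch (a^3*q^3) (q^3) (2*n) * β n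
      = ∑ k ∈ Finset.range (n+1), qPoch (a*q) q (3*n-k) * a^k * q^(k^2) / qPoch (q^3) (q^3) (n-k) * γ k := by
    intro n
    simp only [hγ, Finset.mul_sum]
    rw [tri, hpair n, Finset.mul_sum]
    refine Finset.sum_congr rfl fun r hr => ?_
    have hr : r ≤ n := by simpa [Nat.lt_succ_iff] using hr
    have hf := forward q a hq hq1 ha1 ha3 n r hr
    calc _ = α' r * (a^r * q^(r^2) * qPoch (a^3*q^3) (q^3) (2*n) /
      (qPoch (q^3) (q^3) (n-r) * qPoch (a^3*q^3) (q^3) (n+r))) := by rw [← hαα r]; ring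
      _ = _ := by
        rw [← hf, Finset.mul_sum]
        refine Finset.sum_congr rfl fun k hk => ?_
        rw [show k + r - r = k by omega, div_mul_div_comm, ← mul_div_assoc]
        congr 1
        ring
  intro n
  change _ = γ n
  have hterm : ∀ k ∈ Finset.range (n+1),
      (∏ j ∈ Finset.range (3 * k), (1 - a * q ^ (2 * (n : ℤ) + 1 - (j : ℤ)))) *
              qPoch (a ^ 3 * q ^ 3) (q ^ 3) (2 * (n - k)) / qPoch (q ^ 3) (q ^ 3) k *
            (-1) ^ k * q ^ ((3 * (k * (k - 1) / 2 : ℕ) : ℤ) - (n : ℤ) ^ 2) *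
            a ^ (-(n : ℤ)) * β (n - k)
      = ∑ j ∈ Finset.range (n-k+1), ((q^(n^2))⁻¹ * (a^n)⁻¹ * γ j * a^j * q^(j^2)) *
        (Zp a q (2*n+2-3*k) (3*k) * (-1)^k * (q^3)^(k*(k-1)/2) *
      qPoch (a*q) q (3*(n-k)-j) / (qPoch (q^3) (q^3) k * qPoch (q^3) (q^3) (n-j-k))) := by
    intro k hk
    have e1 : ∏ j ∈ Finset.range (3 * k), (1 - a * q ^ (2 * (n : ℤ) + 1 - (j : ℤ)))
        = Zp a q (2*n+2-3*k) (3*k) := by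
      rw [← Q_Zp]
      refine Finset.prod_congr rfl fun i _ => ?_
      congr 3
      push_cast; ring
    have e2 : q ^ ((3 * (k * (k - 1) / 2 : ℕ) : ℤ) - (n : ℤ) ^ 2) = (q^3)^(k*(k-1)/2) * (q^(n^2))⁻¹ := by
      rw [zpow_sub₀ hq, ← Nat.cast_pow n 2, zpow_natCast, div_eq_mul_inv, ← pow_mul, ← zpow_natCast q (3 * _)]
      push_cast
      rfl
    have e3 : a ^ (-(n : ℤ)) = (a^n)⁻¹ := by rw [zpow_neg, zpow_natCast]
    rw [e1, e2, e3]
    trans (Zp a q (2*n+2-3*k) (3*k) / qPoch (q ^ 3) (q ^ 3) k *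
            (-1) ^ k * ((q^3)^(k*(k-1)/2) * (q^(n^2))⁻¹) * (a^n)⁻¹) *
            (qPoch (a ^ 3 * q ^ 3) (q ^ 3) (2 * (n - k)) * β (n - k))
    · ring
    rw [hβ, Finset.mul_sum]
    refine Finset.sum_congr rfl fun j _ => ?_
    rw [Nat.sub_right_comm n j k]
    generalize qPoch (q^3) (q^3) (n-k-j) = u1
    generalize qPoch (q^3) (q^3) k = u2
    generalize (q^3)^(k*(k-1)/2) = u3
    generalize (q^(n^2))⁻¹ = u4
    generalize q^(j^2) = u5
    rw [div_eq_mul_inv, div_eq_mul_inv, div_eq_mul_inv, mul_inv]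
    ring
  show (1 / qPoch (a * q) q (2 * n)) * _ = γ n
  rw [Finset.sum_congr rfl hterm, tri2]
  have horth : ∀ j ∈ Finset.range (n+1), ∑ k ∈ Finset.range (n-j+1), ((q^(n^2))⁻¹ * (a^n)⁻¹ * γ j * a^j * q^(j^2)) *
        (Zp a q (2*n+2-3*k) (3*k) * (-1)^k * (q^3)^(k*(k-1)/2) *
      qPoch (a*q) q (3*(n-k)-j) / (qPoch (q^3) (q^3) k * qPoch (q^3) (q^3) (n-j-k)))
      = if j = n then γ n * qPoch (a*q) q (2*n) else 0 := by
    intro j hj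
    have hj : j ≤ n := by simpa [Nat.lt_succ_iff] using hj
    rw [← Finset.mul_sum, orth q a hq hq1 n j hj]
    split_ifs with h
    · subst h
      have h1 : q^(j^2) ≠ 0 := pow_ne_zero _ hq
      have h2 : a^j ≠ 0 := pow_ne_zero _ ha
      field_simp
    · simp
  rw [Finset.sum_congr rfl horth, Finset.sum_ite_eq' , if_pos (by simp)]
  have := hA (2*n)
  field_simp
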